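/- Let d ≥ 2, let b : [−1,1] → ℝ be continuously differentiable, let σ ∈ S^{d-1}, and let G : S^{d-1} → ℝ be smooth. Then the following integration-by-parts identity on the sphere holds: ∫_{S^{d-1}} G(σ') b'(σ'·σ) (σ' − (σ'·σ)σ) dσ' = ∫_{S^{d-1}} M_{σ',σ}(∇_{σ'} G(σ')) b(σ'·σ) dσ', where the left-hand side integrand is the spherical gradient in σ of the map σ ↦ b(σ'·σ), ∇_{σ'} G denotes the spherical gradient of G, and M_{σ',σ}(x) := (σ'·σ)x − (σ·x)σ'. -/

import Mathlib

open MeasureTheory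
open scoped RealInnerProductSpace

noncomputable section

/-- Euclidean space `ℝ^d`. -/
abbrev E (d : ℕ) : Type := EuclideanSpace ℝ (Fin d)

/-- The unit sphere `S^{d-1}` of `ℝ^d`. -/
abbrev Sph (d : ℕ) : Type := Metric.sphere (0 : E d) 1

/-- The surface measure on the unit sphere, realized as a Hausdorff measure. -/
def sphMeasure (d : ℕ) : Measure (Sph d) := μH[(d : ℝ) - 1]

open Classical in
/-- The 0-homogeneous extension of a function defined on the unit sphere. -/
def homogExt {d : ℕ} (F : Sph d → ℝ) (x : E d) : ℝ :=
  if hx : x = 0 then 0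
  else F ⟨‖x‖⁻¹ • x, by
    rw [mem_sphere_zero_iff_norm, norm_smul, norm_inv, norm_norm,
      inv_mul_cancel₀ (norm_ne_zero_iff.mpr hx)]⟩

/-- Smoothness of a function on the sphere, via its 0-homogeneous extension. -/
def SphSmooth {d : ℕ} (F : Sph d → ℝ) : Prop :=
  ContDiffOn ℝ (⊤ : ℕ∞) (homogExt F) {x : E d | x ≠ 0}

/-- Spherical gradient: the Euclidean gradient of the 0-homogeneous extension. -/
def sphGrad {d : ℕ} (F : Sph d → ℝ) (σ : Sph d) : E d :=
  gradient (homogExt F) (σ : E d)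

/-- Euclidean Laplacian of a function on `ℝ^d`. -/
def lapl {d : ℕ} (f : E d → ℝ) (x : E d) : ℝ :=
  ∑ i : Fin d,
    fderiv ℝ (fun y => fderiv ℝ f y (EuclideanSpace.single i 1)) x (EuclideanSpace.single i 1)

/-- Spherical Laplacian: the Euclidean Laplacian of the 0-homogeneous extension. -/
def sphLap {d : ℕ} (F : Sph d → ℝ) (σ : Sph d) : ℝ :=
  lapl (homogExt F) (σ : E d)

/-- The spherical linear Boltzmann operator `𝓑` with kernel `b`. -/
def sphB {d : ℕ} (b : ℝ → ℝ) (F : Sph d → ℝ) (σ : Sph d) : ℝ :=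
  ∫ (σ' : Sph d), (F σ' - F σ) * b ⟪(σ' : E d), (σ : E d)⟫ ∂(sphMeasure d)

/-- The intertwined iterated carré du champ `Γ²_{𝓑,Δ}(g,g)`. -/
def Gamma2BD {d : ℕ} (b : ℝ → ℝ) (g : Sph d → ℝ) (σ : Sph d) : ℝ :=
  (1 / 2) * sphB b (fun τ => ‖sphGrad g τ‖ ^ 2) σ
    - ⟪sphGrad g σ, sphGrad (fun τ => sphB b g τ) σ⟫

/-- The iterated carré du champ `Γ²_{Δ,Δ}(g,g)` of the spherical Laplacian. -/
def Gamma2DD {d : ℕ} (g : Sph d → ℝ) (σ : Sph d) : ℝ :=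
  (1 / 2) * sphLap (fun τ => ‖sphGrad g τ‖ ^ 2) σ
    - ⟪sphGrad g σ, sphGrad (fun τ => sphLap g τ) σ⟫

/-- A collision kernel: non-negative, measurable, satisfying the Lévy condition. -/
def LevyKernel (d : ℕ) (b : ℝ → ℝ) : Prop :=
  Measurable b ∧ (∀ c ∈ Set.Icc (-1 : ℝ) 1, 0 ≤ b c) ∧
    ∀ e : Sph d,
      Integrable
        (fun σ' : Sph d => (1 - ⟪(e : E d), (σ' : E d)⟫ ^ 2) * b ⟪(e : E d), (σ' : E d)⟫)
        (sphMeasure d)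

/-- The log-Sobolev inequality `LS(Λ, b)` on the sphere. -/
def LS (d : ℕ) (b : ℝ → ℝ) (Λ : ℝ) : Prop :=
  ∀ f : Sph d → ℝ, SphSmooth f → (∀ σ, 0 < f σ) → (∀ σ, f (-σ) = f σ) →
    Λ * ∫ (σ : Sph d), (∫ (σ' : Sph d),
          (f σ' - f σ) ^ 2 / (f σ' + f σ) * b ⟪(σ' : E d), (σ : E d)⟫ ∂(sphMeasure d))
        ∂(sphMeasure d)
      ≤ ∫ (σ : Sph d), Gamma2BD b (fun τ => Real.log (f τ)) σ * f σ ∂(sphMeasure d)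

/-- The map `M_{a,c}(x) = (a·c) x − (c·x) a`, sending the tangent space at `a` to the
tangent space at `c`. -/
def Mmap {d : ℕ} (a c x : E d) : E d := ⟪a, c⟫ • x - ⟪c, x⟫ • a

/-
The derivations `f ↦ (x ↦ fderiv ℝ f x (A x))` with `A` skew-adjoint differentiate `f` along the
one-parameter groups of rotations `exp (t • A)`. As these preserve the surface measure, the image
of each derivation has mean zero on the sphere, and the Leibniz rule makes the derivation itself
skew-symmetric. Applied to `G` and to `y ↦ b ⟪y, σ⟫`, with `A` the infinitesimal rotation in the
plane of `w` and `σ`, this is the identity tested against the vector `w`.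
-/

open Metric Module InnerProductSpace

section SurfaceMeasure

variable {V : Type*} [NormedAddCommGroup V] [InnerProductSpace ℝ V]

lemma exists_lipschitzOnWith_stereographic_symm {v : V} (hv : ‖v‖ = 1) (w : (ℝ ∙ v)ᗮ) :
    ∃ K, ∃ t ∈ nhds w, LipschitzOnWith K (stereographic hv).symm t :=
  (contDiff_stereoInvFunAux.comp
    (ℝ ∙ v)ᗮ.subtypeL.contDiff).contDiffAt.exists_lipschitzOnWith

lemma coe_stereographic_symm_zero {v : V} (hv : ‖v‖ = 1) :
    ((stereographic hv).symm 0 : V) = -v :=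
  (stereoInvFun_apply hv 0).trans (by simp)

lemma isLocallyFiniteMeasure_hausdorffMeasure_sphere [FiniteDimensional ℝ V]
    [MeasurableSpace V] [BorelSpace V] :
    IsLocallyFiniteMeasure (μH[(finrank ℝ V : ℝ) - 1] : Measure (sphere (0 : V) 1)) where
  finiteAtNhds x := by
    -- Near `x` the sphere is a Lipschitz image of a ball under the stereographic chart from `-x`.
    have hv : ‖(-x : V)‖ = 1 := norm_eq_of_mem_sphere (-x)
    have hdim : (finrank ℝ V : ℝ) - 1 = finrank ℝ (ℝ ∙ (-x : V))ᗮ := by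
      rw [← (ℝ ∙ (-x : V)).finrank_add_finrank_orthogonal,
        finrank_span_singleton (neg_ne_zero.2 (ne_zero_of_mem_unit_sphere x)), Nat.cast_add,
        Nat.cast_one, add_sub_cancel_left]
    have hcenter : (stereographic hv).symm 0 = x := by
      ext1
      rw [coe_stereographic_symm_zero, neg_neg]
    obtain ⟨K, t, ht, hK⟩ := exists_lipschitzOnWith_stereographic_symm hv 0
    have hnhds : t ∩ closedBall 0 1 ∈ nhds 0 :=
      Filter.inter_mem ht (closedBall_mem_nhds 0 one_pos)
    refine ⟨(stereographic hv).symm '' (t ∩ closedBall 0 1), ?_, ?_⟩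
    · simpa only [hcenter] using (isOpenEmbedding_stereographic_symm hv).image_mem_nhds.2 hnhds
    · rw [hdim]
      calc μH[finrank ℝ (ℝ ∙ (-x : V))ᗮ] ((stereographic hv).symm '' (t ∩ closedBall 0 1))
        _ ≤ K ^ (finrank ℝ (ℝ ∙ (-x : V))ᗮ : ℝ) * μH[finrank ℝ (ℝ ∙ (-x : V))ᗮ]
              (t ∩ closedBall 0 1) :=
          (hK.mono Set.inter_subset_left).hausdorffMeasure_image_le (Nat.cast_nonneg _)
        _ < ⊤ := ENNReal.mul_lt_top (ENNReal.rpow_lt_top_of_nonneg (Nat.cast_nonneg _)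
          ENNReal.coe_ne_top) ((measure_mono Set.inter_subset_right).trans_lt
            (isCompact_closedBall 0 1).measure_lt_top)

instance isFiniteMeasure_sphMeasure (d : ℕ) : IsFiniteMeasure (sphMeasure d) := by
  have := isLocallyFiniteMeasure_hausdorffMeasure_sphere (V := E d)
  rw [finrank_euclideanSpace_fin, ← sphMeasure] at this
  exact CompactSpace.isFiniteMeasure

end SurfaceMeasure

section CompactSpace

variable {X W : Type*} [TopologicalSpace X] [CompactSpace X] [MeasurableSpace X]
  [NormedAddCommGroup W] {μ : Measure X} [IsFiniteMeasure μ]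

lemma integrable_of_continuous [OpensMeasurableSpace X] {f : X → W} (hf : Continuous f) :
    Integrable f μ :=
  hf.integrable_of_hasCompactSupport (.of_compactSpace f)

lemma integral_eq_zero_of_hasDerivAt_flow [BorelSpace X] [NormedSpace ℝ W]
    [SecondCountableTopologyEither X W] {φ : ℝ → X ≃ₜ X}
    (hφ : ∀ t, MeasurePreserving (φ t) μ μ) (hφ0 : ∀ x, φ 0 x = x) {f f' : X → W}
    (hf : Continuous f) (hf' : Continuous f')
    (hderiv : ∀ x t, HasDerivAt (fun s => f (φ s x)) (f' (φ t x)) t) :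
    ∫ x, f' x ∂μ = 0 := by
  obtain ⟨C, hC⟩ := isCompact_univ.exists_bound_of_continuousOn hf'.continuousOn
  have hdiff : HasDerivAt (fun t => ∫ x, f (φ t x) ∂μ) (∫ x, f' (φ 0 x) ∂μ) 0 :=
    (hasDerivAt_integral_of_dominated_loc_of_deriv_le (F' := fun t x => f' (φ t x))
      (bound := fun _ => C) Filter.univ_mem
      (.of_forall fun t => (hf.comp (φ t).continuous).aestronglyMeasurable)
      (integrable_of_continuous (hf.comp (φ 0).continuous))
      (hf'.comp (φ 0).continuous).aestronglyMeasurable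
      (.of_forall fun x t _ => hC (φ t x) trivial) (integrable_const C)
      (.of_forall fun x t _ => hderiv x t)).2
  have hconst (t : ℝ) : ∫ x, f (φ t x) ∂μ = ∫ x, f x ∂μ :=
    (hφ t).integral_comp (φ t).measurableEmbedding f
  simp only [hconst, hφ0] at hdiff
  exact hdiff.unique (hasDerivAt_const _ _)

end CompactSpace

lemma continuous_restrict_of_continuousAt {X Y : Type*} [TopologicalSpace X] [TopologicalSpace Y]
    {S : Set X} {f : X → Y} (hf : ∀ x : S, ContinuousAt f x) : Continuous fun x : S => f x :=
  continuous_iff_continuousAt.2 fun x => (hf x).comp continuous_subtype_val.continuousAt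

lemma continuous_restrict_fderiv {V W : Type*} [NormedAddCommGroup V] [NormedSpace ℝ V]
    [NormedAddCommGroup W] [NormedSpace ℝ W] {S : Set V} {f : V → W}
    (hf : ∀ x : S, ContDiffAt ℝ 1 f x) : Continuous fun x : S => fderiv ℝ f x :=
  continuous_restrict_of_continuousAt fun x => (hf x).continuousAt_fderiv one_ne_zero

/-- The isometry of the sphere of radius `r` about the origin induced by a linear isometry. -/
def sphereIsometry {V : Type*} [NormedAddCommGroup V] [NormedSpace ℝ V] (r : ℝ)
    (e : V ≃ₗᵢ[ℝ] V) : sphere (0 : V) r ≃ᵢ sphere (0 : V) r where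
  toFun x := ⟨e x, by simp⟩
  invFun x := ⟨e.symm x, by simp⟩
  left_inv x := by simp
  right_inv x := by simp
  isometry_toFun := Isometry.of_dist_eq fun x y => e.dist_map x y

section Rotations

variable {V : Type*} [NormedAddCommGroup V] [InnerProductSpace ℝ V]

section Complete

variable [CompleteSpace V]

/-- The one-parameter group `t ↦ exp (t • A)` of linear isometries generated by a skew-adjoint
operator `A`. -/
def rotationFlow (A : skewAdjoint (V →L[ℝ] V)) (t : ℝ) : V ≃ₗᵢ[ℝ] V :=
  Unitary.linearIsometryEquiv ⟨NormedSpace.exp (t • (A : V →L[ℝ] V)),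
    let := NormedAlgebra.restrictScalars ℚ ℝ (V →L[ℝ] V)
    NormedSpace.exp_mem_unitary_of_mem_skewAdjoint (skewAdjoint.smul_mem t A.2)⟩

lemma rotationFlow_apply (A : skewAdjoint (V →L[ℝ] V)) (t : ℝ) (x : V) :
    rotationFlow A t x = NormedSpace.exp (t • (A : V →L[ℝ] V)) x := rfl

lemma rotationFlow_zero_apply (A : skewAdjoint (V →L[ℝ] V)) (x : V) : rotationFlow A 0 x = x := by
  rw [rotationFlow_apply, zero_smul ℝ (A : V →L[ℝ] V), NormedSpace.exp_zero, one_apply_eq_self]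

lemma hasDerivAt_rotationFlow (A : skewAdjoint (V →L[ℝ] V)) (x : V) (t : ℝ) :
    HasDerivAt (fun s => rotationFlow A s x) ((A : V →L[ℝ] V) (rotationFlow A t x)) t := by
  simpa using! (hasDerivAt_exp_smul_const' (A : V →L[ℝ] V) t).clm_apply (hasDerivAt_const t x)

/-- The generator of the rotations in the oriented plane of `u` and `w`. -/
def planeRotation (u w : V) : skewAdjoint (V →L[ℝ] V) :=
  ⟨rankOne ℝ w u - rankOne ℝ u w, by
    simp [skewAdjoint.mem_iff, ContinuousLinearMap.star_eq_adjoint]⟩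

lemma planeRotation_apply (u w x : V) :
    (planeRotation u w : V →L[ℝ] V) x = ⟪u, x⟫ • w - ⟪w, x⟫ • u := rfl

lemma inner_sub_inner_smul_eq_inner_planeRotation {σ : V} (hσ : ‖σ‖ = 1) (w x : V) :
    ⟪w, x - ⟪x, σ⟫ • σ⟫ = ⟪(planeRotation w σ : V →L[ℝ] V) x, σ⟫ := by
  simp only [planeRotation_apply, inner_sub_left, inner_sub_right, real_inner_smul_left,
    real_inner_smul_right, real_inner_self_eq_norm_sq, hσ, real_inner_comm x σ]
  ring

end Complete

variable [FiniteDimensional ℝ V] [MeasurableSpace V] [BorelSpace V] {r : ℝ}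
  {μ : Measure (sphere (0 : V) r)} [IsFiniteMeasure μ]

lemma integral_fderiv_skewAdjoint_eq_zero {W : Type*} [NormedAddCommGroup W] [NormedSpace ℝ W]
    (hμ : ∀ e, MeasurePreserving (sphereIsometry r e) μ μ) (A : skewAdjoint (V →L[ℝ] V))
    {f : V → W} (hf : ∀ x : sphere (0 : V) r, ContDiffAt ℝ 1 f x) :
    ∫ x : sphere (0 : V) r, fderiv ℝ f x ((A : V →L[ℝ] V) x) ∂μ = 0 :=
  integral_eq_zero_of_hasDerivAt_flow
    (φ := fun t => (sphereIsometry r (rotationFlow A t)).toHomeomorph) (f := fun x => f x)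
    (fun t => hμ (rotationFlow A t)) (fun x => Subtype.ext (rotationFlow_zero_apply A x))
    (continuous_restrict_of_continuousAt fun x => (hf x).continuousAt)
    ((continuous_restrict_fderiv hf).clm_apply
      ((A : V →L[ℝ] V).continuous.comp continuous_subtype_val))
    fun x t => ((hf (sphereIsometry r (rotationFlow A t) x)).differentiableAt
      one_ne_zero).hasFDerivAt.comp_hasDerivAt t (hasDerivAt_rotationFlow A x t)

lemma integral_mul_fderiv_skewAdjoint (hμ : ∀ e, MeasurePreserving (sphereIsometry r e) μ μ)
    (A : skewAdjoint (V →L[ℝ] V)) {f g : V → ℝ}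
    (hf : ∀ x : sphere (0 : V) r, ContDiffAt ℝ 1 f x)
    (hg : ∀ x : sphere (0 : V) r, ContDiffAt ℝ 1 g x) :
    ∫ x : sphere (0 : V) r, f x * fderiv ℝ g x ((A : V →L[ℝ] V) x) ∂μ =
      -∫ x : sphere (0 : V) r, g x * fderiv ℝ f x ((A : V →L[ℝ] V) x) ∂μ := by
  have hintegrable {f g : V → ℝ} (hf : ∀ x : sphere (0 : V) r, ContDiffAt ℝ 1 f x)
      (hg : ∀ x : sphere (0 : V) r, ContDiffAt ℝ 1 g x) :
      Integrable (fun x : sphere (0 : V) r => f x * fderiv ℝ g x ((A : V →L[ℝ] V) x)) μ :=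
    integrable_of_continuous ((continuous_restrict_of_continuousAt fun x => (hf x).continuousAt).mul
      ((continuous_restrict_fderiv hg).clm_apply
        ((A : V →L[ℝ] V).continuous.comp continuous_subtype_val)))
  rw [eq_neg_iff_add_eq_zero, ← integral_add (hintegrable hf hg) (hintegrable hg hf),
    ← integral_fderiv_skewAdjoint_eq_zero hμ A fun x => (hf x).mul (hg x)]
  congr 1 with x
  rw [fderiv_fun_mul ((hf x).differentiableAt one_ne_zero) ((hg x).differentiableAt one_ne_zero)]
  rfl

end Rotations

section ZonalFunctions

variable {V : Type*} [NormedAddCommGroup V] [InnerProductSpace ℝ V] {b : ℝ → ℝ} {x σ : V}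

lemma contDiffAt_comp_inner {n : WithTop ℕ∞} (hb : ContDiffAt ℝ n b ⟪x, σ⟫) :
    ContDiffAt ℝ n (fun y => b ⟪y, σ⟫) x :=
  hb.comp x (contDiffAt_id.inner ℝ contDiffAt_const)

lemma fderiv_comp_inner_apply (hb : DifferentiableAt ℝ b ⟪x, σ⟫) (v : V) :
    fderiv ℝ (fun y => b ⟪y, σ⟫) x v = deriv b ⟪x, σ⟫ * ⟪v, σ⟫ := by
  have hinner : HasFDerivAt (fun y => ⟪y, σ⟫) (innerSL ℝ σ) x := by
    simp_rw [real_inner_comm σ]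
    exact (innerSL ℝ σ).hasFDerivAt
  have hcomp : HasFDerivAt (fun y => b ⟪y, σ⟫) (deriv b ⟪x, σ⟫ • innerSL ℝ σ) x :=
    hb.hasDerivAt.comp_hasFDerivAt x hinner
  rw [hcomp.fderiv, smul_apply, smul_eq_mul, innerSL_apply_apply,
    real_inner_comm v]

end ZonalFunctions

section Sphere

variable {d : ℕ}

lemma measurePreserving_sphereIsometry (e : E d ≃ₗᵢ[ℝ] E d) :
    MeasurePreserving (sphereIsometry 1 e) (sphMeasure d) (sphMeasure d) :=
  (sphereIsometry 1 e).measurePreserving_hausdorffMeasure _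

lemma homogExt_coe (F : Sph d → ℝ) (x : Sph d) : homogExt F (x : E d) = F x := by
  simp [homogExt, ne_zero_of_mem_unit_sphere x]

lemma inner_Mmap (w a c x : E d) :
    ⟪w, Mmap a c x⟫ = -⟪x, (planeRotation w c : E d →L[ℝ] E d) a⟫ := by
  simp only [Mmap, planeRotation_apply, inner_sub_right, real_inner_smul_right,
    real_inner_comm w, real_inner_comm c]
  ring

lemma inner_mem_Icc_of_sphere (x σ : Sph d) : ⟪(x : E d), (σ : E d)⟫ ∈ Set.Icc (-1 : ℝ) 1 :=
  real_inner_mem_Icc_of_norm_eq_one (norm_eq_of_mem_sphere x) (norm_eq_of_mem_sphere σ)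

lemma continuous_of_contDiffAt_homogExt {G : Sph d → ℝ}
    (hG : ∀ x : Sph d, ContDiffAt ℝ 1 (homogExt G) x) : Continuous G := by
  simpa only [homogExt_coe] using continuous_restrict_of_continuousAt fun x => (hG x).continuousAt

lemma continuous_sphGrad {G : Sph d → ℝ} (hG : ∀ x : Sph d, ContDiffAt ℝ 1 (homogExt G) x) :
    Continuous (sphGrad G) :=
  (toDual ℝ (E d)).symm.continuous.comp (continuous_restrict_fderiv hG)

lemma continuous_deriv_comp_inner_sphere {b : ℝ → ℝ}
    (hb : ∀ t ∈ Set.Icc (-1 : ℝ) 1, ContDiffAt ℝ 1 b t) (σ : Sph d) :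
    Continuous fun x : Sph d => deriv b ⟪(x : E d), (σ : E d)⟫ := by
  have hderiv : Continuous fun t : Set.Icc (-1 : ℝ) 1 => deriv b t :=
    (continuous_restrict_fderiv fun t : Set.Icc (-1 : ℝ) 1 => hb t t.2).clm_apply continuous_const
  have hinner : Continuous fun x : Sph d => ⟪(x : E d), (σ : E d)⟫ := by fun_prop
  exact hderiv.comp (hinner.subtype_mk fun x => inner_mem_Icc_of_sphere x σ)

lemma integrable_deriv_comp_inner_smul {b : ℝ → ℝ} {G : Sph d → ℝ}
    (hb : ∀ t ∈ Set.Icc (-1 : ℝ) 1, ContDiffAt ℝ 1 b t) (σ : Sph d)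
    (hG : ∀ x : Sph d, ContDiffAt ℝ 1 (homogExt G) x) :
    Integrable (fun x : Sph d => (G x * deriv b ⟪(x : E d), (σ : E d)⟫) •
      ((x : E d) - ⟪(x : E d), (σ : E d)⟫ • (σ : E d))) (sphMeasure d) :=
  integrable_of_continuous <| ((continuous_of_contDiffAt_homogExt hG).mul
    (continuous_deriv_comp_inner_sphere hb σ)).smul (by fun_prop)

lemma integrable_comp_inner_smul_Mmap {b : ℝ → ℝ} {G : Sph d → ℝ}
    (hb : ∀ t ∈ Set.Icc (-1 : ℝ) 1, ContDiffAt ℝ 1 b t) (σ : Sph d)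
    (hG : ∀ x : Sph d, ContDiffAt ℝ 1 (homogExt G) x) :
    Integrable (fun x : Sph d => b ⟪(x : E d), (σ : E d)⟫ •
      Mmap (x : E d) (σ : E d) (sphGrad G x)) (sphMeasure d) := by
  have hbσ : Continuous fun x : Sph d => b ⟪(x : E d), (σ : E d)⟫ :=
    continuous_restrict_of_continuousAt fun x =>
      (contDiffAt_comp_inner (hb _ (inner_mem_Icc_of_sphere x σ))).continuousAt
  have hgrad : Continuous (sphGrad G) := continuous_sphGrad hG
  exact integrable_of_continuous (hbσ.smul (by unfold Mmap; fun_prop))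

end Sphere

theorem villani_integration_by_parts_general (d : ℕ) (b : ℝ → ℝ)
    (hb : ∀ t ∈ Set.Icc (-1 : ℝ) 1, ContDiffAt ℝ 1 b t) (σ : Sph d) (G : Sph d → ℝ)
    (hG : ∀ x : Sph d, ContDiffAt ℝ 1 (homogExt G) x) :
    (∫ (σ' : Sph d), (G σ' * deriv b ⟪(σ' : E d), (σ : E d)⟫) •
        ((σ' : E d) - ⟪(σ' : E d), (σ : E d)⟫ • (σ : E d)) ∂(sphMeasure d))
    = ∫ (σ' : Sph d),
        b ⟪(σ' : E d), (σ : E d)⟫ • Mmap (σ' : E d) (σ : E d) (sphGrad G σ')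
      ∂(sphMeasure d) := by
  have hbσ (x : Sph d) : ContDiffAt ℝ 1 b ⟪(x : E d), (σ : E d)⟫ :=
    hb _ (inner_mem_Icc_of_sphere x σ)
  have hzonal (x : Sph d) : ContDiffAt ℝ 1 (fun y : E d => b ⟪y, (σ : E d)⟫) x :=
    contDiffAt_comp_inner (hbσ x)
  refine ext_inner_left ℝ fun w => ?_
  rw [← integral_inner (integrable_deriv_comp_inner_smul hb σ hG),
    ← integral_inner (integrable_comp_inner_smul_Mmap hb σ hG)]
  let A := planeRotation w (σ : E d)
  calc ∫ x : Sph d, ⟪w, (G x * deriv b ⟪(x : E d), (σ : E d)⟫) •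
          ((x : E d) - ⟪(x : E d), (σ : E d)⟫ • (σ : E d))⟫ ∂(sphMeasure d)
    _ = ∫ x : Sph d, homogExt G x *
          fderiv ℝ (fun y : E d => b ⟪y, (σ : E d)⟫) x ((A : E d →L[ℝ] E d) x) ∂(sphMeasure d) := by
      congr 1 with x
      rw [real_inner_smul_right, homogExt_coe, mul_assoc,
        inner_sub_inner_smul_eq_inner_planeRotation (norm_eq_of_mem_sphere σ),
        fderiv_comp_inner_apply ((hbσ x).differentiableAt one_ne_zero)]
    _ = -∫ x : Sph d, b ⟪(x : E d), (σ : E d)⟫ *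
          fderiv ℝ (homogExt G) x ((A : E d →L[ℝ] E d) x) ∂(sphMeasure d) :=
      integral_mul_fderiv_skewAdjoint measurePreserving_sphereIsometry A hG hzonal
    _ = ∫ x : Sph d, ⟪w, b ⟪(x : E d), (σ : E d)⟫ •
          Mmap (x : E d) (σ : E d) (sphGrad G x)⟫ ∂(sphMeasure d) := by
      rw [← integral_neg]
      congr 1 with x
      rw [real_inner_smul_right, inner_Mmap, sphGrad, inner_gradient_left, mul_neg]

/-- Villani's integration-by-parts identity on the sphere: the gradient in
`σ` of `σ ↦ b(σ'·σ)` integrated against `G` can be rewritten using the maps `M_{σ',σ}`. -/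
theorem villani_integration_by_parts
    (d : ℕ) (hd : 2 ≤ d) (b : ℝ → ℝ) (hb : ContDiff ℝ 1 b)
    (σ : Sph d) (G : Sph d → ℝ) (hG : SphSmooth G) :
    (∫ (σ' : Sph d), (G σ' * deriv b ⟪(σ' : E d), (σ : E d)⟫) •
        ((σ' : E d) - ⟪(σ' : E d), (σ : E d)⟫ • (σ : E d)) ∂(sphMeasure d))
    = ∫ (σ' : Sph d),
        b ⟪(σ' : E d), (σ : E d)⟫ • Mmap (σ' : E d) (σ : E d) (sphGrad G σ')
      ∂(sphMeasure d) :=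
  villani_integration_by_parts_general d b (fun _ _ => hb.contDiffAt) σ G fun x =>
    (hG.contDiffAt (isOpen_ne.mem_nhds (ne_zero_of_mem_unit_sphere x))).of_le (mod_cast le_top)
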